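/- arXiv:1112.5826 — 3 statements merged into one kernel-verified Lean document; each statement's English description precedes it below -/
import Mathlib

section
/- Let R be an ergodic non-singular countable measurable equivalence relation on a standard Borel space (X, μ) with σ-finite measure, with Radon–Nikodym cocycle c. Assume that the ratio set r(R, μ) coincides with the essential range of c, and that r(R, μ) \ {0} is a discrete subset of (0, ∞). Then the subrelation R⁰ = {(x, y) ∈ R : c(x, y) = 1} is ergodic. -/
/-!
Let `A` be `R⁰`-saturated with `A` and `Aᶜ` both non-null. Ergodicity and non-singularity of `R` force
the set of `x ∉ A` that are `R`-related to a point of `A` to be non-null. By a Lindelöf argument there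
is `t > 0` such that, for each `δ > 0`, the points `x ∉ A` with some `y ∈ A`, `(x, y) ∈ R` and
`|c x y - t| < δ` still form a non-null set; hence `t` lies in the essential range, that is, in the
ratio set. As the nonzero part of that set is discrete, values of `c` close to `t` but different from
`t` occur only over a null set of points. So there is a non-null measurable set `Z` of points `x ∉ A`
having some `w ∈ A` with `c x w = t`. Since `t` is in the ratio set, some `x ∈ Z` and `Sx ∈ Z` satisfy
`c x (S x) = t`. Then `c (S x) w = t⁻¹ * t = 1`, so `w ∈ A` and `S x ∉ A` are `R⁰`-equivalent, which is
a contradiction.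

The measure-theoretic input is that a non-null analytic set contains a non-null compact set
(`exists_isCompact_measure_pos_of_analyticSet`, a form of Choquet capacitability). It is applied to
projections of Borel subsets of `X × X`, and replaces the Lusin–Novikov theorem.
-/


open MeasureTheory Set
open scoped ENNReal

section RatioSet

variable {X : Type*} [MeasurableSpace X]

/-- A countable measurable equivalence relation on `X`. -/
structure IsCountableEqRel (R : Set (X × X)) : Prop where
  refl : ∀ x : X, (x, x) ∈ R
  symm : ∀ {x y : X}, (x, y) ∈ R → (y, x) ∈ R
  trans : ∀ {x y z : X}, (x, y) ∈ R → (y, z) ∈ R → (x, z) ∈ R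
  measurableSet : MeasurableSet R
  countable_classes : ∀ x : X, {y | (x, y) ∈ R}.Countable

/-- The `R`-saturation of a set. -/
def relSaturation (R : Set (X × X)) (A : Set X) : Set X :=
  {y | ∃ x ∈ A, (x, y) ∈ R}

/-- Non-singularity: the saturation of every null set is null. -/
def IsNonSingularRel (R : Set (X × X)) (μ : Measure X) : Prop :=
  ∀ A : Set X, μ A = 0 → μ (relSaturation R A) = 0

/-- A partial `R`-isomorphism `T : A → B`. -/
structure IsPartialIso (R : Set (X × X)) (A B : Set X) (T : X → X) : Prop where
  measurableSet_dom : MeasurableSet A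
  measurableSet_ran : MeasurableSet B
  bijOn : Set.BijOn T A B
  graph_mem : ∀ x ∈ A, (x, T x) ∈ R
  measurable_restrict : Measurable (A.restrict T)
  measurableSet_image : ∀ C, C ⊆ A → MeasurableSet C → MeasurableSet (T '' C)

/-- A Radon-Nikodym cocycle for `R` with respect to `μ`. -/
structure IsRNCocycle (R : Set (X × X)) (μ : Measure X) (c : X → X → ℝ) : Prop where
  measurable : Measurable (Function.uncurry c)
  pos : ∀ {x y : X}, (x, y) ∈ R → 0 < c x y
  cocycle : ∀ {x y z : X}, (x, y) ∈ R → (y, z) ∈ R → c x z = c x y * c y z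
  rnDeriv : ∀ (A B : Set X) (T : X → X), IsPartialIso R A B T →
      ∀ C, C ⊆ A → MeasurableSet C →
        μ (T '' C) = ∫⁻ x in C, ENNReal.ofReal (c x (T x)) ∂μ

/-- The set `r_{Z,ε}(R,μ)`. -/
def ratioSetIn (R : Set (X × X)) (μ : Measure X) (c : X → X → ℝ)
    (Z : Set X) (ε : ℝ) : Set ℝ :=
  {l | 0 ≤ l ∧ ∃ (A B : Set X) (T : X → X), A ⊆ Z ∧ B ⊆ Z ∧
    0 < μ A ∧ 0 < μ B ∧ IsPartialIso R A B T ∧ ∀ x ∈ A, |c x (T x) - l| < ε}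

/-- The set `r̄_{Z,ε}(R,μ)`. -/
def ratioSetInBar (R : Set (X × X)) (μ : Measure X) (c : X → X → ℝ)
    (Z : Set X) (ε : ℝ) : Set ℝ :=
  {l | 0 ≤ l ∧ ∃ (A B : Set X) (T : X → X), A ⊆ Z ∧ B ⊆ Z ∧
    μ (Z \ (A ∪ B)) = 0 ∧
    0 < μ A ∧ 0 < μ B ∧ IsPartialIso R A B T ∧ ∀ x ∈ A, |c x (T x) - l| < ε}

/-- The ratio set `r(R,μ)`. -/
def ratioSet (R : Set (X × X)) (μ : Measure X) (c : X → X → ℝ) : Set ℝ :=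
  ⋂ (Z : Set X) (_ : MeasurableSet Z) (_ : 0 < μ Z) (ε : ℝ) (_ : 0 < ε),
    ratioSetIn R μ c Z ε

/-- Ergodicity of a relation: every saturated measurable set is null or conull. -/
def IsErgodicRel (R : Set (X × X)) (μ : Measure X) : Prop :=
  ∀ A : Set X, MeasurableSet A → relSaturation R A ⊆ A → μ A = 0 ∨ μ Aᶜ = 0

end RatioSet

section EssentialRange

variable {X : Type*} [MeasurableSpace X]

/-- The value `ν(C) = ∫ #{y : (x,y) ∈ C} dμ(x)` of the canonical σ-finite measure `ν` on `X × X`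
associated with a countable equivalence relation. -/
noncomputable def relMeasureOf (μ : Measure X) (C : Set (X × X)) : ℝ≥0∞ :=
  ∫⁻ x, ({y | (x, y) ∈ C}.encard : ℝ≥0∞) ∂μ

/-- The essential range of a cocycle `c` on `R` with respect to the measure
`ν(C) = ∫ #{y : (x,y) ∈ C} dμ(x)` on `R`: the smallest closed subset of `[0,∞)` containing
`c(x,y)` for `ν`-almost every `(x,y) ∈ R`. -/
def essentialRange (R : Set (X × X)) (μ : Measure X) (c : X → X → ℝ) : Set ℝ :=
  {t | 0 ≤ t ∧ ∀ ε > (0 : ℝ), 0 < relMeasureOf μ {q | q ∈ R ∧ |c q.1 q.2 - t| < ε}}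

/-- The subrelation `R⁰ = {(x,y) ∈ R : c(x,y) = 1}`. -/
def kernelRel (R : Set (X × X)) (c : X → X → ℝ) : Set (X × X) :=
  {q | q ∈ R ∧ c q.1 q.2 = 1}

end EssentialRange

/-- A non-null analytic set contains a non-null compact set. If `f` is a continuous parametrization by
`ℕ → ℕ`, the coordinates of the parameter are bounded successively by `N 0, N 1, …` so that the image
keeps measure above a fixed `a > 0`; the image of the compact box `∏ {0, …, N i}` has measure at least
`a`, because every open set containing it contains the image of some stage. -/
theorem exists_isCompact_measure_pos_of_analyticSet {X : Type*} [TopologicalSpace X] [PolishSpace X]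
    [MeasurableSpace X] [BorelSpace X] (μ : Measure X) [IsFiniteMeasure μ] {s : Set X}
    (hs : AnalyticSet s) (hpos : 0 < μ s) : ∃ K ⊆ s, IsCompact K ∧ 0 < μ K := by
  rw [AnalyticSet] at hs
  rcases hs with rfl | ⟨f, hf, rfl⟩
  · simp at hpos
  obtain ⟨a, ha0, ha⟩ := exists_between hpos
  have step : ∀ (k : ℕ) (E : Set (ℕ → ℕ)), ∃ m : ℕ,
      a < μ (f '' E) → a < μ (f '' (E ∩ {s | s k ≤ m})) := by
    intro k E
    by_cases h : a < μ (f '' E)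
    · have hU : f '' E = ⋃ m : ℕ, f '' (E ∩ {s | s k ≤ m}) := by
        rw [← image_iUnion, ← inter_iUnion]
        congr 1
        ext x
        simp only [mem_inter_iff, mem_iUnion, mem_ofPred_eq]
        exact ⟨fun hx => ⟨hx, _, le_rfl⟩, fun hx => hx.1⟩
      have hmono : Monotone fun m : ℕ => f '' (E ∩ {s | s k ≤ m}) := by
        intro m m' hm
        exact image_mono (inter_subset_inter_right _ fun x (hx : x k ≤ m) => hx.trans hm)
      rw [hU, hmono.measure_iUnion, lt_iSup_iff] at h
      obtain ⟨m, hm⟩ := h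
      exact ⟨m, fun _ => hm⟩
    · exact ⟨0, fun h' => absurd h' h⟩
  choose M hM using step
  let E : ℕ → Set (ℕ → ℕ) := fun k =>
    Nat.rec univ (fun k E => E ∩ {s | s k ≤ M k E}) k
  let N : ℕ → ℕ := fun k => M k (E k)
  have hE : ∀ k, a < μ (f '' E k) := by
    intro k
    induction k with
    | zero => simpa [E] using ha
    | succ k ih => exact hM k (E k) ih
  have hEN : ∀ k, ∀ x ∈ E k, ∀ i < k, x i ≤ N i := by
    intro k
    induction k with
    | zero => intro x _ i hi; omega
    | succ k ih =>
      intro x hx i hi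
      have hx' : x ∈ E k ∩ {s | s k ≤ M k (E k)} := hx
      rcases Nat.lt_succ_iff_lt_or_eq.1 hi with h | rfl
      · exact ih x hx'.1 i h
      · exact hx'.2
  let K : Set (ℕ → ℕ) := Set.pi univ fun i => Set.Iic (N i)
  have hK : IsCompact K := isCompact_univ_pi fun i => (Set.finite_Iic (N i)).isCompact
  refine ⟨f '' K, image_subset_range _ _, hK.image hf, ?_⟩
  by_contra hcon
  have hlt : μ (f '' K) < a := lt_of_le_of_lt (not_lt.1 hcon) ha0
  obtain ⟨U, hKU, hUo, hUa⟩ := (f '' K).exists_isOpen_lt_of_lt a hlt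
  have hx : ∀ k, ∃ x ∈ E k, f x ∉ U := by
    intro k
    by_contra! h
    exact absurd ((hE k).trans_le (measure_mono (image_subset_iff.2 h))) (not_lt.2 hUa.le)
  choose x hxE hxU using hx
  -- Truncating `x k` at `N` gives points of the compact box agreeing with `x k` below index `k`.
  have hy : ∀ k, (fun i => min (x k i) (N i)) ∈ K := fun k i _ => min_le_right (x k i) (N i)
  obtain ⟨y, hyK, φ, hφ, hlim⟩ := hK.tendsto_subseq hy
  have hlim' : Filter.Tendsto (fun k => x (φ k)) Filter.atTop (nhds y) := by
    rw [tendsto_pi_nhds] at hlim ⊢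
    intro i
    refine (hlim i).congr' ?_
    filter_upwards [Filter.eventually_gt_atTop i] with k hk
    exact min_eq_left (hEN _ _ (hxE (φ k)) i (hk.trans_le hφ.le_apply))
  have hev := ((hf.tendsto y).comp hlim').eventually
    (hUo.mem_nhds (hKU (mem_image_of_mem f hyK)))
  obtain ⟨k, hk⟩ := hev.exists
  exact hxU _ hk

/-- A non-null projection of a Borel set contains a non-null Borel set. -/
theorem exists_measurableSet_subset_fst_image {X : Type*} [MeasurableSpace X]
    [StandardBorelSpace X] (μ : Measure X) [SigmaFinite μ] {C : Set (X × X)}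
    (hC : MeasurableSet C) (hpos : μ (Prod.fst '' C) ≠ 0) :
    ∃ Z ⊆ Prod.fst '' C, MeasurableSet Z ∧ 0 < μ Z := by
  let _ := upgradeStandardBorel X
  have han : AnalyticSet (Prod.fst '' C) := hC.analyticSet_image measurable_fst
  have h0 : 0 < μ.toFinite (Prod.fst '' C) :=
    pos_iff_ne_zero.2 fun h => hpos (absolutelyContinuous_toFinite μ h)
  obtain ⟨K, hKs, hK, hKpos⟩ := exists_isCompact_measure_pos_of_analyticSet μ.toFinite han h0
  exact ⟨K, hKs, hK.measurableSet,
    pos_iff_ne_zero.2 fun h => hKpos.ne' (toFinite_absolutelyContinuous μ h)⟩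

/-- Since `relMeasureOf` integrates a function that is not known to be measurable, positivity is
obtained from a measurable set inside the projection. -/
theorem relMeasureOf_pos {X : Type*} [MeasurableSpace X]
    [StandardBorelSpace X] (μ : Measure X) [SigmaFinite μ] {C : Set (X × X)}
    (hC : MeasurableSet C) (hpos : μ (Prod.fst '' C) ≠ 0) : 0 < relMeasureOf μ C := by
  obtain ⟨Z, hZs, hZ, hZpos⟩ := exists_measurableSet_subset_fst_image μ hC hpos
  refine hZpos.trans_le ?_
  rw [← lintegral_indicator_one hZ, relMeasureOf]
  refine lintegral_mono fun x => ?_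
  by_cases hx : x ∈ Z
  · rw [indicator_of_mem hx]
    obtain ⟨⟨x', y⟩, hq, rfl⟩ := hZs hx
    have h1 : (1 : ℕ∞) ≤ {y | (x', y) ∈ C}.encard :=
      one_le_encard_iff_nonempty.2 ⟨y, hq⟩
    exact ENat.toENNReal_le.2 h1 |>.trans' (by simp)
  · simp [hx]

/-- A set of values each of which is locally attained only over a null set is itself attained only
over a null set, by the Lindelöf property of `ℝ`. -/
theorem measure_fst_image_eq_zero_of_locally {X : Type*} [MeasurableSpace X] (μ : Measure X)
    (g : X × X → ℝ) (C : Set (X × X)) (S : Set ℝ)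
    (h : ∀ t ∈ S, ∃ δ > (0 : ℝ), μ (Prod.fst '' {q | q ∈ C ∧ |g q - t| < δ}) = 0) :
    μ (Prod.fst '' {q | q ∈ C ∧ g q ∈ S}) = 0 := by
  choose! δ hδ h0 using h
  obtain ⟨T, hTS, hT, hcov⟩ := TopologicalSpace.countable_cover_nhdsWithin
    (f := fun t => Metric.ball t (δ t)) (s := S)
    fun t ht => mem_nhdsWithin_of_mem_nhds (Metric.ball_mem_nhds t (hδ t ht))
  refine measure_mono_null ?_ ((measure_biUnion_null_iff hT).2 fun t ht => h0 t (hTS ht))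
  rintro _ ⟨q, ⟨hqC, hqS⟩, rfl⟩
  obtain ⟨t, ht, hqt⟩ := mem_iUnion₂.1 (hcov hqS)
  exact mem_iUnion₂.2 ⟨t, ht, q, ⟨hqC, by simpa [Real.dist_eq] using hqt⟩, rfl⟩

/-- If the saturation of a measurable set adds only a null set, then adding a suitable saturated
measurable null set makes it saturated, so ergodicity applies. -/
theorem null_or_conull_of_saturation_diff_null {X : Type*} [MeasurableSpace X] (μ : Measure X)
    (R : Set (X × X)) (hns : IsNonSingularRel R μ) (herg : IsErgodicRel R μ) {A : Set X}
    (hA : MeasurableSet A) (h : μ (relSaturation R A \ A) = 0) : μ A = 0 ∨ μ Aᶜ = 0 := by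
  let N : ℕ → Set X := fun k => Nat.rec (toMeasurable μ (relSaturation R A \ A))
    (fun _ E => toMeasurable μ (relSaturation R E)) k
  have hN : ∀ k, μ (N k) = 0 := by
    intro k
    induction k with
    | zero => exact (measure_toMeasurable _).trans h
    | succ k ih => exact (measure_toMeasurable _).trans (hns _ ih)
  have hNm : ∀ k, MeasurableSet (N k) := by
    intro k
    cases k <;> exact measurableSet_toMeasurable _ _
  have hNu : μ (⋃ k, N k) = 0 := measure_iUnion_null hN
  rcases herg (A ∪ ⋃ k, N k) (hA.union (.iUnion hNm)) (by
    rintro y ⟨x, hx | hx, hxy⟩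
    · by_cases hy : y ∈ A
      · exact .inl hy
      · exact .inr (mem_iUnion.2 ⟨0, subset_toMeasurable _ _ ⟨⟨x, hx, hxy⟩, hy⟩⟩)
    · obtain ⟨k, hk⟩ := mem_iUnion.1 hx
      exact .inr (mem_iUnion.2 ⟨k + 1, subset_toMeasurable μ (relSaturation R (N k))
        ⟨x, hk, hxy⟩⟩)) with h0 | h0
  · exact .inl (measure_mono_null subset_union_left h0)
  · refine .inr (measure_mono_null ?_ (measure_union_null h0 hNu))
    intro x hx
    by_cases hxN : x ∈ ⋃ k, N k
    · exact .inr hxN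
    · exact .inl fun hx' => hx'.elim hx hxN

/-- let `R` be an ergodic non-singular countable measurable equivalence relation on
a standard Borel space `(X,μ)` with σ-finite measure and Radon-Nikodym cocycle `c`. If the ratio
set `r(R,μ)` coincides with the essential range of `c` and `r(R,μ) \ {0}` is a discrete subset
of `(0,∞)`, then the subrelation `R⁰ = {(x,y) ∈ R : c(x,y) = 1}` is ergodic. -/
theorem statement_3
    {X : Type*} [MeasurableSpace X] [StandardBorelSpace X]
    (μ : Measure X) [SigmaFinite μ] (R : Set (X × X))
    (hR : IsCountableEqRel R) (hns : IsNonSingularRel R μ)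
    (c : X → X → ℝ) (hc : IsRNCocycle R μ c)
    (herg : IsErgodicRel R μ)
    (hrange : ratioSet R μ c = essentialRange R μ c)
    (hdiscrete : ∀ l ∈ ratioSet R μ c, l ≠ 0 → ∃ ε > (0 : ℝ),
        ∀ l' ∈ ratioSet R μ c, l' ≠ 0 → |l' - l| < ε → l' = l) :
    IsErgodicRel (kernelRel R c) μ := by
  intro A hA hsat
  by_contra hcon
  have hgm : Measurable fun q : X × X => c q.1 q.2 := hc.measurable
  have hball : ∀ t δ : ℝ, MeasurableSet {q : X × X | |c q.1 q.2 - t| < δ} := by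
    intro t δ
    exact measurableSet_lt ((hgm.sub_const t).abs) measurable_const
  let C : Set (X × X) := R ∩ (Aᶜ ×ˢ A)
  have hC : MeasurableSet C := hR.measurableSet.inter (hA.compl.prod hA)
  have hCpos : μ (Prod.fst '' C) ≠ 0 := by
    intro h0
    refine hcon (null_or_conull_of_saturation_diff_null μ R hns herg hA (measure_mono_null ?_ h0))
    rintro y ⟨⟨x, hx, hxy⟩, hy⟩
    exact ⟨(y, x), ⟨hR.symm hxy, hy, hx⟩, rfl⟩
  have hmem : ∀ t : ℝ, 0 ≤ t →
      (∀ δ > (0 : ℝ), μ (Prod.fst '' {q | q ∈ R ∧ |c q.1 q.2 - t| < δ}) ≠ 0) →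
      t ∈ ratioSet R μ c := by
    intro t ht h
    rw [hrange]
    exact ⟨ht, fun δ hδ => relMeasureOf_pos μ (hR.measurableSet.inter (hball t δ)) (h δ hδ)⟩
  obtain ⟨t, ht, htC⟩ : ∃ t ∈ Ioi (0 : ℝ), ∀ δ > (0 : ℝ),
      μ (Prod.fst '' {q | q ∈ C ∧ |c q.1 q.2 - t| < δ}) ≠ 0 := by
    by_contra! h
    refine hCpos (measure_mono_null (image_mono ?_)
      (measure_fst_image_eq_zero_of_locally μ (fun q => c q.1 q.2) C (Ioi 0) h))
    exact fun q hq => ⟨hq, hc.pos hq.1⟩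
  rw [mem_Ioi] at ht
  have htr : t ∈ ratioSet R μ c := hmem t ht.le fun δ hδ h0 => by
    refine htC δ hδ (measure_mono_null (image_mono ?_) h0)
    exact fun q hq => ⟨hq.1.1, hq.2⟩
  obtain ⟨ε, hε, hiso⟩ := hdiscrete t htr ht.ne'
  -- Values near `t` but different from `t` are outside the ratio set.
  have hnear : μ (Prod.fst '' {q | q ∈ R ∧ c q.1 q.2 ∈ {s | 0 < s ∧ |s - t| < ε ∧ s ≠ t}}) = 0 := by
    refine measure_fst_image_eq_zero_of_locally μ (fun q => c q.1 q.2) R _ ?_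
    rintro s ⟨hs, hst, hne⟩
    by_contra! h
    exact hne (hiso s (hmem s hs.le h) hs.ne' hst)
  have hQ : μ (Prod.fst '' {q | q ∈ C ∧ c q.1 q.2 = t}) ≠ 0 := by
    intro h0
    refine htC ε hε (measure_mono_null ?_ (measure_union_null h0 hnear))
    rintro _ ⟨q, ⟨hqC, hqt⟩, rfl⟩
    by_cases h : c q.1 q.2 = t
    · exact .inl ⟨q, ⟨hqC, h⟩, rfl⟩
    · exact .inr ⟨q, ⟨hqC.1, hc.pos hqC.1, hqt, h⟩, rfl⟩
  obtain ⟨Z, hZs, hZ, hZpos⟩ := exists_measurableSet_subset_fst_image μ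
    (hC.inter (hgm (measurableSet_singleton t))) hQ
  simp only [ratioSet, mem_iInter] at htr
  obtain ⟨-, D, B, S, hDZ, hBZ, hDpos, -, hS, hSt⟩ := htr Z hZ hZpos ε hε
  obtain ⟨x, hxD, hx⟩ : ∃ x ∈ D, c x (S x) = t := by
    by_contra! h
    refine hDpos.ne' (measure_mono_null ?_ hnear)
    intro x hx
    exact ⟨(x, S x), ⟨hS.graph_mem x hx, hc.pos (hS.graph_mem x hx), hSt x hx, h x hx⟩, rfl⟩
  have hxS := hS.graph_mem x hxD
  obtain ⟨⟨x, w⟩, ⟨⟨hxw, -, hwA⟩, hcw⟩, rfl⟩ := hZs (hDZ hxD)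
  obtain ⟨⟨z, _⟩, ⟨⟨-, hzA, -⟩, -⟩, hz⟩ := hZs (hBZ (hS.bijOn.mapsTo hxD))
  simp only at hxS hx hz hwA hzA
  have hcw : c x w = t := hcw
  have hwx := hR.symm hxw
  -- `c w x * c x w = c w w = 1`, so `c w x = t⁻¹`.
  have hww : c w w = 1 := by
    have h1 := hc.cocycle (hR.refl w) (hR.refl w)
    have h2 := hc.pos (hR.refl w)
    nlinarith
  have h1 : c w (S x) = 1 := by
    rw [hc.cocycle hwx hxS, hx, ← hcw, ← hc.cocycle hwx hxw, hww]
  have hSA : S x ∈ A := hsat ⟨w, hwA, hR.trans hwx hxS, h1⟩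
  exact hzA (by rw [hz]; exact hSA)
end

section
/- Let R be a non-singular countable measurable equivalence relation on a standard Borel space (X, μ) with σ-finite measure, with Radon–Nikodym cocycle c. Then for every Borel set Z ⊆ X with μ(Z) > 0 and every ε > 0 one has r(R, μ) ⊆ r̄_{Z,ε}(R, μ). Moreover, for every λ ∈ r(R, μ) with λ ≠ 1, the witnessing sets can be chosen disjoint: there exist disjoint Borel sets A, B ⊆ Z with μ(Z \ (A ∪ B)) = 0 and a partial R-isomorphism T : A → B with |c(x, Tx) − λ| < ε for all x ∈ A. -/
/-!
The proof is an exhaustion argument. For `l = 1` the identity of `Z` works, because `c x x = 1`.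
For `l ≠ 1`, shrink the tolerance to `min ε |l - 1|`: a partial isomorphism witnessing `l` with
that tolerance has no fixed point, so, points being separated by countably many measurable sets,
it maps some measurable set `C` of positive measure off itself (`IsPartialIso.exists_disjoint`).
Hence every subset of positive measure of `Z` contains a "matched" set `C ∪ T '' C`.
By Zorn's lemma there is a maximal pairwise disjoint family of matched subsets of `Z`; it is
countable by σ-finiteness, so its members glue to one partial isomorphism
(`exists_glue`), and by maximality they cover `Z` up to a null set.
-/

open MeasureTheory Set
open scoped ENNReal

section Exhaustion

variable {X : Type*} [MeasurableSpace X] {R : Set (X × X)} {μ : Measure X} {c : X → X → ℝ}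

lemma measurable_restrict_iff_inter {A : Set X} (hA : MeasurableSet A) {T : X → X} :
    Measurable (A.domRestrict T) ↔ ∀ D, MeasurableSet D → MeasurableSet (A ∩ T ⁻¹' D) := by
  have key : ∀ D, MeasurableSet (A.domRestrict T ⁻¹' D) ↔ MeasurableSet (A ∩ T ⁻¹' D) := by
    intro D
    rw [← (MeasurableEmbedding.subtype_coe hA).measurableSet_image]
    have : A.domRestrict T ⁻¹' D = Subtype.val ⁻¹' (T ⁻¹' D) := rfl
    rw [this, Subtype.image_preimage_coe]
  exact forall_congr' fun D => imp_congr_right fun _ => key D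

lemma IsPartialIso.restrict {A B C : Set X} {T : X → X} (h : IsPartialIso R A B T)
    (hCA : C ⊆ A) (hC : MeasurableSet C) : IsPartialIso R C (T '' C) T where
  measurableSet_dom := hC
  measurableSet_ran := h.measurableSet_image C hCA hC
  bijOn := (h.bijOn.injOn.mono hCA).bijOn_image
  graph_mem x hx := h.graph_mem x (hCA hx)
  measurable_restrict := by
    refine (measurable_restrict_iff_inter hC).2 fun D hD => ?_
    have := hC.inter
      ((measurable_restrict_iff_inter h.measurableSet_dom).1 h.measurable_restrict D hD)
    rwa [← inter_assoc, inter_eq_left.2 hCA] at this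
  measurableSet_image D hD := h.measurableSet_image D (hD.trans hCA)

lemma IsRNCocycle.self_eq_one (hR : IsCountableEqRel R) (hc : IsRNCocycle R μ c) (x : X) :
    c x x = 1 := by
  have h1 := hc.cocycle (hR.refl x) (hR.refl x)
  have h2 := hc.pos (hR.refl x)
  exact (mul_eq_left₀ h2.ne').1 h1.symm

/-- Positivity of the cocycle makes domain and range of a partial isomorphism null together. -/
lemma IsRNCocycle.measure_dom_eq_zero_iff (hc : IsRNCocycle R μ c) {A B : Set X} {T : X → X}
    (h : IsPartialIso R A B T) : μ A = 0 ↔ μ B = 0 := by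
  have hB := hc.rnDeriv A B T h A subset_rfl h.measurableSet_dom
  rw [h.bijOn.image_eq] at hB
  constructor
  · intro hA
    rw [hB, Measure.restrict_eq_zero.2 hA, lintegral_zero_measure]
  · intro h0
    rw [h0, eq_comm, ← lintegral_subtype_comap h.measurableSet_dom] at hB
    by_contra hne
    refine absurd hB (ne_of_gt ?_)
    have hm : Measurable fun x : A => ENNReal.ofReal (c x (T x)) :=
      (hc.measurable.comp (measurable_subtype_coe.prodMk h.measurable_restrict)).ennreal_ofReal
    rw [lintegral_pos_iff_support hm]
    have : Function.support (fun x : A => ENNReal.ofReal (c x (T x))) = univ := by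
      ext x
      simpa using hc.pos (h.graph_mem x x.2)
    rw [this, comap_subtype_coe_apply h.measurableSet_dom, image_univ, Subtype.range_coe]
    exact pos_iff_ne_zero.2 hne

/-- A partial isomorphism without fixed points moves some set of positive measure off itself:
a set separating `x` from `T x` can be taken from a fixed countable family. -/
lemma IsPartialIso.exists_disjoint [MeasurableSpace.CountablySeparated X] {A B : Set X}
    {T : X → X} (h : IsPartialIso R A B T) (hfix : ∀ x ∈ A, T x ≠ x) (hA : 0 < μ A) :
    ∃ C ⊆ A, MeasurableSet C ∧ 0 < μ C ∧ Disjoint C (T '' C) := by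
  obtain ⟨S, hS, hsep⟩ := exists_seq_separating X MeasurableSet.empty univ
  have hpre := (measurable_restrict_iff_inter h.measurableSet_dom).1 h.measurable_restrict
  let F : ℕ ⊕ ℕ → Set X := Sum.elim (fun n => S n ∩ (A ∩ T ⁻¹' (S n)ᶜ))
    (fun n => (S n)ᶜ ∩ (A ∩ T ⁻¹' (S n)))
  have hcov : A ⊆ ⋃ i, F i := by
    intro x hx
    have hne := hfix x hx
    have : ∃ n, ¬ (x ∈ S n ↔ T x ∈ S n) := by
      by_contra! hall
      exact hne (hsep x trivial (T x) trivial hall).symm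
    obtain ⟨n, hn⟩ := this
    rw [mem_iUnion]
    by_cases hxn : x ∈ S n
    · exact ⟨.inl n, hxn, hx, fun hT => hn ⟨fun _ => hT, fun _ => hxn⟩⟩
    · refine ⟨.inr n, hxn, hx, ?_⟩
      by_contra hT
      exact hn ⟨fun h => absurd h hxn, fun h => absurd h hT⟩
  obtain ⟨i, hi⟩ := exists_measure_pos_of_not_measure_iUnion_null
    (hA.trans_le (measure_mono hcov)).ne'
  refine ⟨F i, ?_, ?_, hi, ?_⟩
  · rcases i with n | n <;> exact fun x hx => hx.2.1
  · rcases i with n | n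
    · exact (hS n).inter (hpre _ (hS n).compl)
    · exact (hS n).compl.inter (hpre _ (hS n))
  · rw [Set.disjoint_left]
    rcases i with n | n
    · rintro _ hx ⟨y, hy, rfl⟩
      exact hy.2.2 hx.1
    · rintro _ hx ⟨y, hy, rfl⟩
      exact hx.1 hy.2.2

/-- `Matched R c l ε A B T` says that `T : A → B` is a partial `R`-isomorphism between disjoint
sets whose Radon–Nikodym cocycle is within `ε` of `l`. -/
def Matched (R : Set (X × X)) (c : X → X → ℝ) (l ε : ℝ) (A B : Set X) (T : X → X) : Prop :=
  Disjoint A B ∧ IsPartialIso R A B T ∧ ∀ x ∈ A, |c x (T x) - l| < ε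

/-- Countably many matched pairs with pairwise disjoint unions combine to a single one. -/
lemma exists_glue {ι : Type*} [Countable ι] {l ε : ℝ} {A B : ι → Set X} {T : ι → X → X}
    (hM : ∀ i, Matched R c l ε (A i) (B i) (T i))
    (hdisj : ∀ i j, i ≠ j → Disjoint (A i ∪ B i) (A j ∪ B j)) :
    ∃ T', Matched R c l ε (⋃ i, A i) (⋃ i, B i) T' := by
  classical
  let T' : X → X := fun x => if h : ∃ i, x ∈ A i then T h.choose x else x
  have huniq : ∀ i j x, x ∈ A i ∪ B i → x ∈ A j ∪ B j → i = j := fun i j x hi hj => by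
    by_contra hne
    exact Set.disjoint_left.1 (hdisj i j hne) hi hj
  have hT' : ∀ i, ∀ x ∈ A i, T' x = T i x := fun i x hx => by
    have h : ∃ i, x ∈ A i := ⟨i, hx⟩
    have : h.choose = i := huniq _ _ x (.inl h.choose_spec) (.inl hx)
    simp only [T', dif_pos h, this]
  have hmaps : ∀ i, ∀ x ∈ A i, T' x ∈ B i := fun i x hx => by
    rw [hT' i x hx]
    exact (hM i).2.1.bijOn.mapsTo hx
  have hAm : MeasurableSet (⋃ i, A i) := .iUnion fun i => (hM i).2.1.measurableSet_dom
  refine ⟨T', ?_, ⟨hAm, .iUnion fun i => (hM i).2.1.measurableSet_ran, ⟨?_, ?_, ?_⟩, ?_, ?_, ?_⟩,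
    ?_⟩
  · rw [Set.disjoint_left]
    intro x hx hx'
    obtain ⟨i, hi⟩ := mem_iUnion.1 hx
    obtain ⟨j, hj⟩ := mem_iUnion.1 hx'
    obtain rfl := huniq i j x (.inl hi) (.inr hj)
    exact Set.disjoint_left.1 (hM i).1 hi hj
  · intro x hx
    obtain ⟨i, hi⟩ := mem_iUnion.1 hx
    exact mem_iUnion.2 ⟨i, hmaps i x hi⟩
  · intro x hx y hy hxy
    obtain ⟨i, hi⟩ := mem_iUnion.1 hx
    obtain ⟨j, hj⟩ := mem_iUnion.1 hy
    obtain rfl := huniq i j (T' x) (.inr (hmaps i x hi)) (.inr (hxy ▸ hmaps j y hj))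
    rw [hT' i x hi, hT' i y hj] at hxy
    exact (hM i).2.1.bijOn.injOn hi hj hxy
  · intro y hy
    obtain ⟨i, hi⟩ := mem_iUnion.1 hy
    obtain ⟨x, hx, rfl⟩ := (hM i).2.1.bijOn.surjOn hi
    exact ⟨x, mem_iUnion.2 ⟨i, hx⟩, hT' i x hx⟩
  · intro x hx
    obtain ⟨i, hi⟩ := mem_iUnion.1 hx
    rw [hT' i x hi]
    exact (hM i).2.1.graph_mem x hi
  · refine (measurable_restrict_iff_inter hAm).2 fun D hD => ?_
    have : (⋃ i, A i) ∩ T' ⁻¹' D = ⋃ i, A i ∩ T i ⁻¹' D := by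
      rw [iUnion_inter]
      refine iUnion_congr fun i => ?_
      ext x
      simp only [mem_inter_iff, mem_preimage]
      exact and_congr_right fun hx => by rw [hT' i x hx]
    rw [this]
    exact .iUnion fun i => (measurable_restrict_iff_inter (hM i).2.1.measurableSet_dom).1
      (hM i).2.1.measurable_restrict D hD
  · intro C hCA hC
    have : T' '' C = ⋃ i, T i '' (A i ∩ C) := by
      conv_lhs => rw [← inter_eq_right.2 hCA, iUnion_inter, image_iUnion]
      exact iUnion_congr fun i => image_congr fun x (hx : x ∈ A i ∩ C) => hT' i x hx.1
    rw [this]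
    exact .iUnion fun i => (hM i).2.1.measurableSet_image _ inter_subset_left
      ((hM i).2.1.measurableSet_dom.inter hC)
  · intro x hx
    obtain ⟨i, hi⟩ := mem_iUnion.1 hx
    rw [hT' i x hi]
    exact (hM i).2.2 x hi

/-- The local step of the exhaustion: a witness for `l ∈ ratioSet R μ c` with tolerance at most
`|l - 1|` has no fixed point, so it restricts to a matched pair. -/
lemma exists_matched [MeasurableSpace.CountablySeparated X] (hR : IsCountableEqRel R)
    (hc : IsRNCocycle R μ c) {l ε : ℝ} (hl : l ∈ ratioSet R μ c) (hl1 : l ≠ 1) (hε : 0 < ε)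
    {Z : Set X} (hZ : MeasurableSet Z) (hpos : 0 < μ Z) :
    ∃ A B T, Matched R c l ε A B T ∧ A ∪ B ⊆ Z ∧ 0 < μ (A ∪ B) := by
  simp only [ratioSet, mem_iInter] at hl
  obtain ⟨-, A, B, T, hAZ, hBZ, hA, -, hT, hcl⟩ :=
    hl Z hZ hpos (min ε |l - 1|) (lt_min hε (abs_pos.2 (sub_ne_zero.2 hl1)))
  have hfix : ∀ x ∈ A, T x ≠ x := fun x hx hTx => by
    have := (hcl x hx).trans_le (min_le_right _ _)
    rw [hTx, hc.self_eq_one hR, abs_sub_comm] at this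
    exact this.false
  obtain ⟨C, hCA, hC, hCpos, hdisj⟩ := hT.exists_disjoint hfix hA
  refine ⟨C, T '' C, T, ⟨hdisj, hT.restrict hCA hC,
    fun x hx => (hcl x (hCA hx)).trans_le (min_le_left _ _)⟩,
    union_subset (hCA.trans hAZ) ?_, hCpos.trans_le (measure_mono subset_union_left)⟩
  exact ((image_mono hCA).trans hT.bijOn.mapsTo.image_subset).trans hBZ

/-- The exhaustion: a maximal disjoint family of matched pairs in `Z` covers `Z` up to a null
set. -/
lemma exists_matched_conull [MeasurableSpace.CountablySeparated X] [SigmaFinite μ]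
    (hR : IsCountableEqRel R) (hc : IsRNCocycle R μ c) {l ε : ℝ} (hl : l ∈ ratioSet R μ c)
    (hl1 : l ≠ 1) (hε : 0 < ε) {Z : Set X} (hZ : MeasurableSet Z) :
    ∃ A B T, Matched R c l ε A B T ∧ A ∪ B ⊆ Z ∧ μ (Z \ (A ∪ B)) = 0 := by
  -- Zorn's lemma is applied to families of unions `A ∪ B`; the maps `T` are chosen afterwards.
  let good : Set (Set X) :=
    {U | ∃ A B T, Matched R c l ε A B T ∧ A ∪ B = U ∧ U ⊆ Z ∧ 0 < μ U}
  obtain ⟨F, hF⟩ := zorn_subset {F : Set (Set X) | F ⊆ good ∧ F.PairwiseDisjoint id} (by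
    intro K hK hchain
    refine ⟨⋃₀ K, ⟨sUnion_subset fun F hF => (hK hF).1, ?_⟩, fun F hF => subset_sUnion_of_mem hF⟩
    exact (pairwiseDisjoint_sUnion hchain.directedOn).2 fun F hF => (hK hF).2)
  obtain ⟨hFgood, hFdisj⟩ := hF.prop
  choose A B T hM hU hUZ hUpos using fun U : F => hFgood U.2
  have hUm : ∀ U : F, MeasurableSet (U : Set X) := fun U => by
    rw [← hU U]
    exact (hM U).2.1.measurableSet_dom.union (hM U).2.1.measurableSet_ran
  have hd : Pairwise (Function.onFun Disjoint fun U : F => (U : Set X)) := fun U V hUV =>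
    hFdisj U.2 V.2 (Subtype.coe_injective.ne hUV)
  have : Countable F := by
    have := Measure.countable_meas_pos_of_disjoint_iUnion (μ := μ) hUm hd
    rw [← countable_univ_iff]
    exact this.mono fun U _ => hUpos U
  obtain ⟨T', hT'⟩ := exists_glue hM fun U V hUV => by
    rw [hU U, hU V]
    exact hd hUV
  have hunion : (⋃ i, A i) ∪ (⋃ i, B i) = ⋃ U : F, (U : Set X) := by
    rw [← iUnion_union_distrib]
    exact iUnion_congr hU
  refine ⟨_, _, T', hT', ?_, ?_⟩ <;> rw [hunion]
  · exact iUnion_subset hUZ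
  by_contra hne
  obtain ⟨A', B', S, hS, hsub, hSpos⟩ := exists_matched hR hc hl hl1 hε
    (hZ.diff (.iUnion hUm)) (pos_iff_ne_zero.2 hne)
  have hmem : A' ∪ B' ∈ F := by
    refine hF.le_of_ge (y := insert (A' ∪ B') F) ⟨?_, ?_⟩ (subset_insert _ _) (mem_insert _ _)
    · exact insert_subset ⟨A', B', S, hS, rfl, hsub.trans sdiff_subset, hSpos⟩ hFgood
    · refine hFdisj.insert fun V hV _ => ?_
      exact Set.disjoint_left.2 fun x hx hxV => (hsub hx).2 (mem_iUnion.2 ⟨⟨V, hV⟩, hxV⟩)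
  obtain ⟨x, hx⟩ := nonempty_of_measure_ne_zero hSpos.ne'
  exact (hsub hx).2 (mem_iUnion.2 ⟨⟨_, hmem⟩, hx⟩)
end Exhaustion

/-- for a non-singular countable measurable equivalence relation `R` on a standard
Borel space `(X,μ)` with σ-finite measure and Radon-Nikodym cocycle `c`, for every Borel set
`Z ⊆ X` of positive measure and every `ε > 0` one has `r(R,μ) ⊆ r̄_{Z,ε}(R,μ)`; moreover for
`λ ∈ r(R,μ)` with `λ ≠ 1` the witnessing sets `A`, `B` can be chosen disjoint. -/
theorem statement_5
    {X : Type*} [MeasurableSpace X] [StandardBorelSpace X]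
    (μ : Measure X) [SigmaFinite μ] (R : Set (X × X))
    (hR : IsCountableEqRel R) (hns : IsNonSingularRel R μ)
    (c : X → X → ℝ) (hc : IsRNCocycle R μ c) :
    ∀ Z : Set X, MeasurableSet Z → 0 < μ Z → ∀ ε > (0 : ℝ),
      ratioSet R μ c ⊆ ratioSetInBar R μ c Z ε ∧
      ∀ l ∈ ratioSet R μ c, l ≠ 1 →
        ∃ (A B : Set X) (T : X → X), A ⊆ Z ∧ B ⊆ Z ∧ Disjoint A B ∧
          μ (Z \ (A ∪ B)) = 0 ∧ 0 < μ A ∧ 0 < μ B ∧ IsPartialIso R A B T ∧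
          ∀ x ∈ A, |c x (T x) - l| < ε := by
  intro Z hZ hZpos ε hε
  have main : ∀ l ∈ ratioSet R μ c, l ≠ 1 →
      ∃ (A B : Set X) (T : X → X), A ⊆ Z ∧ B ⊆ Z ∧ Disjoint A B ∧
        μ (Z \ (A ∪ B)) = 0 ∧ 0 < μ A ∧ 0 < μ B ∧ IsPartialIso R A B T ∧
        ∀ x ∈ A, |c x (T x) - l| < ε := by
    intro l hl hl1
    obtain ⟨A, B, T, ⟨hdisj, hT, hcl⟩, hsub, hnull⟩ :=
      exists_matched_conull hR hc hl hl1 hε hZ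
    have hA : μ A ≠ 0 := fun hA => by
      have hAB : μ (A ∪ B) = 0 :=
        measure_union_null hA ((hc.measure_dom_eq_zero_iff hT).1 hA)
      have : μ Z = 0 := measure_mono_null
        (fun x hx => by by_cases h : x ∈ A ∪ B <;> simp_all) (measure_union_null hnull hAB)
      exact hZpos.ne' this
    exact ⟨A, B, T, subset_union_left.trans hsub, subset_union_right.trans hsub, hdisj, hnull,
      pos_iff_ne_zero.2 hA, pos_iff_ne_zero.2 ((hc.measure_dom_eq_zero_iff hT).not.1 hA), hT, hcl⟩
  refine ⟨fun l hl => ?_, main⟩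
  by_cases hl1 : l = 1
  · subst hl1
    refine ⟨zero_le_one, Z, Z, id, subset_rfl, subset_rfl, by simp, hZpos, hZpos,
      ⟨hZ, hZ, bijOn_id Z, fun x _ => hR.refl x, measurable_subtype_coe,
        fun C _ hC => by simpa using hC⟩, fun x _ => ?_⟩
    simpa [hc.self_eq_one hR] using hε
  · obtain ⟨A, B, T, hAZ, hBZ, -, hnull, hA, hB, hT, hcl⟩ := main l hl hl1
    have h0 : 0 ≤ l := by
      simp only [ratioSet, mem_iInter] at hl
      exact (hl Z hZ hZpos ε hε).1
    exact ⟨h0, A, B, T, hAZ, hBZ, hnull, hA, hB, hT, hcl⟩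
end

section
/- Let R be a Dedekind domain with field of fractions K, and let a ⊆ R be a nonzero ideal. Then the R-modules K/a and K/R are isomorphic. -/
/-!
The quotient `K/R` is split into its `a`-primary part and its prime-to-`a` part, and only
the former has to be changed to obtain `K/a`.

Let `P = ⋃ₙ a⁻ⁿ` (`awayPart`) and, for `α : R`, let `Q α = α S⁻¹R` where `S = 1 + a`
(`nearPart`). Then `P + Q α = K` for `α ≠ 0` (`awayPart_sup_nearPart`), and `P ∩ Q 1 = R`. The
ideal `a` becomes principal in the semilocal ring `S⁻¹R`: pick `α` with `a = a² + αR`, so that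
Nakayama's lemma gives `t ∈ 1 + a` with `t a ⊆ αR`, whence `P ∩ Q α = a`
(`awayPart_inf_nearPart`). The Chinese remainder theorem now gives
`K/R ≃ K/P × K/Q 1` and `K/a ≃ K/P × K/Q α`, and multiplication by `α` on `K` induces
`K/Q 1 ≃ K/Q α`.
-/

namespace QuotientIso

variable {R : Type*} [CommRing R] (K : Type*) [Field K] [Algebra R K]

/-- The union of the fractional ideals `a⁻ⁿ = {x | aⁿ x ⊆ R}`. -/
def awayPart (a : Ideal R) : Submodule R K where
  carrier := {x | ∃ n : ℕ, ∀ y ∈ a ^ n, ∃ r : R, y • x = algebraMap R K r}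
  zero_mem' := ⟨0, fun y _ => ⟨0, by simp⟩⟩
  add_mem' := by
    rintro x x' ⟨n, hn⟩ ⟨m, hm⟩
    refine ⟨n + m, fun y hy => ?_⟩
    obtain ⟨r, hr⟩ := hn y (Ideal.pow_le_pow_right (Nat.le_add_right n m) hy)
    obtain ⟨s, hs⟩ := hm y (Ideal.pow_le_pow_right (Nat.le_add_left m n) hy)
    exact ⟨r + s, by rw [smul_add, hr, hs, map_add]⟩
  smul_mem' := by
    rintro c x ⟨n, hn⟩
    refine ⟨n, fun y hy => ?_⟩
    obtain ⟨r, hr⟩ := hn y hy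
    exact ⟨c * r, by rw [smul_comm, hr, Algebra.smul_def, map_mul]⟩

/-- The submodule `α S⁻¹R` of `K`, where `S = 1 + a`. -/
def nearPart (a : Ideal R) (α : R) : Submodule R K where
  carrier := {x | ∃ t : R, t - 1 ∈ a ∧ ∃ r : R, t • x = algebraMap R K (α * r)}
  zero_mem' := ⟨1, by simp, 0, by simp⟩
  add_mem' := by
    rintro x x' ⟨t, ht, r, hr⟩ ⟨s, hs, q, hq⟩
    refine ⟨t * s, ?_, s * r + t * q, ?_⟩
    · have : t * s - 1 = s * (t - 1) + (s - 1) := by ring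
      rw [this]
      exact a.add_mem (a.mul_mem_left _ ht) hs
    · simp only [Algebra.smul_def, map_mul, map_add] at *
      linear_combination algebraMap R K s * hr + algebraMap R K t * hq
  smul_mem' := by
    rintro c x ⟨t, ht, r, hr⟩
    refine ⟨t, ht, c * r, ?_⟩
    simp only [Algebra.smul_def, map_mul] at *
    linear_combination algebraMap R K c * hr

/-- An element congruent to `1` modulo `a` is invertible modulo every power of `a`. -/
lemma exists_mul_add_eq_one {a : Ideal R} {t : R} (ht : t - 1 ∈ a) (n : ℕ) :
    ∃ s, ∃ u ∈ a ^ n, s * t + u = 1 := by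
  have h : IsCoprime (Ideal.span {t}) a := by
    rw [Ideal.isCoprime_iff_exists]
    exact ⟨t, Ideal.mem_span_singleton_self t, 1 - t, by simpa using a.neg_mem ht, by ring⟩
  obtain ⟨i, hi, u, hu, h1⟩ := Ideal.isCoprime_iff_exists.mp (h.pow_right (n := n))
  obtain ⟨s, rfl⟩ := Ideal.mem_span_singleton'.mp hi
  exact ⟨s, u, hu, h1⟩

/-- If `e ⊇ a` becomes generated by its element `α` after inverting `1 + a`, then the two parts
intersect in `e`. -/
lemma awayPart_inf_nearPart {a e : Ideal R} {α : R} (hα : α ∈ e) (hae : a ≤ e)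
    (h : ∃ t : R, t - 1 ∈ a ∧ ∀ x ∈ e, t * x ∈ Ideal.span {α}) :
    awayPart K a ⊓ nearPart K a α = Submodule.map (Algebra.linearMap R K) e := by
  apply le_antisymm
  · rintro x ⟨⟨n, hn⟩, t, ht, r, hr⟩
    obtain ⟨s, u, hu, h1⟩ := exists_mul_add_eq_one ht (n + 1)
    -- `u x ∈ a · aⁿ x ⊆ a`, by induction on the representation of `u`
    have key : ∃ q ∈ a, u • x = algebraMap R K q := by
      clear h1
      rw [pow_succ'] at hu
      induction hu using Submodule.mul_induction_on' with
      | mem_mul_mem y hy z hz =>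
        obtain ⟨q, hq⟩ := hn z hz
        exact ⟨y * q, a.mul_mem_right _ hy, by rw [mul_smul, hq, Algebra.smul_def, map_mul]⟩
      | add y _ z _ hy hz =>
        obtain ⟨q, hq, hyq⟩ := hy
        obtain ⟨q', hq', hzq⟩ := hz
        exact ⟨q + q', a.add_mem hq hq', by rw [add_smul, hyq, hzq, map_add]⟩
    obtain ⟨q, hq, hux⟩ := key
    refine ⟨s * (α * r) + q, e.add_mem (e.mul_mem_left _ (e.mul_mem_right _ hα)) (hae hq), ?_⟩
    have h2 := congrArg (algebraMap R K) h1
    simp only [Algebra.smul_def, map_mul, map_add, map_one, Algebra.linearMap_apply] at *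
    linear_combination x * h2 - algebraMap R K s * hr - hux
  · rintro _ ⟨x, hx, rfl⟩
    refine ⟨⟨0, fun y _ => ⟨y * x, by simp [Algebra.smul_def]⟩⟩, ?_⟩
    obtain ⟨t, ht, hte⟩ := h
    obtain ⟨r, hr⟩ := Ideal.mem_span_singleton'.mp (hte x hx)
    exact ⟨t, ht, r, by rw [mul_comm α, hr]; simp [Algebra.smul_def]⟩

/-- Every nonzero `d` divides the elements of `aⁿ b` for some `n` and some ideal `b` coprime to `a`:
take for `b` the stable value of `(dR : aⁿ)`. Since `(b : a) = b`, cancellation of ideals shows that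
no maximal ideal contains both `a` and `b`. -/
lemma exists_pow_mul_le [IsDedekindDomain R] (a : Ideal R) {d : R} (hd : d ≠ 0) :
    ∃ (n : ℕ) (b : Ideal R), IsCoprime b a ∧ ∀ y ∈ a ^ n, ∀ z ∈ b, d ∣ y * z := by
  let f : ℕ →o Ideal R :=
    ⟨fun n => (Ideal.span {d}).colon ((a ^ n : Ideal R) : Set R), fun m n hmn =>
      Submodule.colon_mono le_rfl (Ideal.pow_le_pow_right hmn)⟩
  have hf : ∀ n z, z ∈ f n ↔ ∀ y ∈ a ^ n, d ∣ z * y := by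
    intro n z
    change z ∈ (Ideal.span {d}).colon ((a ^ n : Ideal R) : Set R) ↔ _
    simp [Submodule.mem_colon, Ideal.mem_span_singleton]
  obtain ⟨n, hn⟩ := monotone_stabilizes_iff_noetherian.mpr (inferInstance : IsNoetherian R R) f
  refine ⟨n, f n, ?_, fun y hy z hz => mul_comm z y ▸ (hf n z).mp hz y hy⟩
  rw [Ideal.isCoprime_iff_sup_eq]
  by_contra hne
  obtain ⟨p, hp, hle⟩ := Ideal.exists_le_maximal _ hne
  obtain ⟨J, hJ⟩ := Ideal.dvd_iff_le.mpr (le_sup_left.trans hle)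
  have hJf : J ≤ f n := by
    intro z hz
    rw [hn (n + 1) n.le_succ, hf]
    intro y hy
    rw [pow_succ'] at hy
    induction hy using Submodule.mul_induction_on' with
    | mem_mul_mem y hy w hw =>
      have : y * z ∈ f n := hJ ▸ Ideal.mul_mem_mul (hle (Ideal.mem_sup_right hy)) hz
      have := (hf n _).mp this w hw
      convert this using 1
      ring
    | add y _ w _ hy hw =>
      rw [mul_add]
      exact dvd_add hy hw
  have hJ' : f n = J := le_antisymm (hJ.le.trans Ideal.mul_le_right) hJf
  have hJ0 : J ≠ 0 := by
    rintro rfl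
    have : d ∈ f n := (hf n d).mpr fun y _ => dvd_mul_right d y
    rw [hJ'] at this
    exact hd this
  have : p * J = 1 * J := by rw [← hJ, hJ', one_mul]
  exact hp.ne_top (by simpa using mul_right_cancel₀ hJ0 this)

lemma awayPart_sup_nearPart [IsDedekindDomain R] [IsFractionRing R K]
    (a : Ideal R) {α : R} (hα : α ≠ 0) : awayPart K a ⊔ nearPart K a α = ⊤ := by
  rw [eq_top_iff]
  intro x _
  have hα' : algebraMap R K α ≠ 0 := by simpa using hα
  obtain ⟨r, d, hd, hx⟩ := IsFractionRing.div_surjective (A := R) (x / algebraMap R K α)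
  have hd0 : d ≠ 0 := nonZeroDivisors.ne_zero hd
  have hd' : algebraMap R K d ≠ 0 := by simpa using hd0
  obtain ⟨n, b, hab, hb⟩ := exists_pow_mul_le a hd0
  obtain ⟨t, ht, u, hu, h1⟩ := Ideal.isCoprime_iff_exists.mp (hab.pow_right (n := n))
  obtain ⟨s, hs, v, hv, h2⟩ := Ideal.isCoprime_iff_exists.mp hab
  have hxd : algebraMap R K d * x = algebraMap R K (α * r) := by
    rw [map_mul]
    field_simp at hx
    linear_combination -hx
  -- multiplying by an element of `aⁿ b` clears the denominator `d`
  have clear : ∀ y ∈ a ^ n, ∀ z ∈ b, ∃ q : R, (y * z) • x = algebraMap R K (α * q) := by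
    intro y hy z hz
    obtain ⟨q, hq⟩ := hb y hy z hz
    refine ⟨q * r, ?_⟩
    rw [hq, Algebra.smul_def]
    simp only [map_mul] at *
    linear_combination algebraMap R K q * hxd
  rw [← one_smul R x, ← h1, add_smul]
  refine Submodule.add_mem_sup ⟨n, fun y hy => ?_⟩ ⟨s, ?_, ?_⟩
  · obtain ⟨q, hq⟩ := clear y hy t ht
    exact ⟨α * q, by rw [← mul_smul, hq]⟩
  · rw [← h2]
    simpa using hv
  · obtain ⟨q, hq⟩ := clear u hu s hs
    exact ⟨q, by rw [← mul_smul, mul_comm, hq]⟩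

/-- The Chinese remainder theorem for two submodules. -/
noncomputable def quotientInfEquiv {M : Type*} [AddCommGroup M] [Module R M]
    (P Q N : Submodule R M) (hN : P ⊓ Q = N) (h : P ⊔ Q = ⊤) :
    (M ⧸ N) ≃ₗ[R] (M ⧸ P) × (M ⧸ Q) :=
  (Submodule.quotEquivOfEq N _ (by rw [LinearMap.ker_prod, P.ker_mkQ, Q.ker_mkQ, hN])).trans
    ((P.mkQ.prod Q.mkQ).quotKerEquivOfSurjective (by
      rw [← LinearMap.range_eq_top, LinearMap.range_prod_eq (by simpa using h)]
      simp))

/-- Multiplication by `α` induces `K/S⁻¹R ≃ K/αS⁻¹R`. -/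
lemma nonempty_nearPart_equiv [IsDomain R] [IsFractionRing R K] (a : Ideal R) {α : R}
    (hα : α ≠ 0) : Nonempty ((K ⧸ nearPart K a α) ≃ₗ[R] (K ⧸ nearPart K a 1)) := by
  have hα' : algebraMap R K α ≠ 0 := by simpa using hα
  let m : K ≃ₗ[R] K := (LinearEquiv.smulOfNeZero K K _ hα').restrictScalars R
  refine ⟨(Submodule.Quotient.equiv (nearPart K a 1) (nearPart K a α) m ?_).symm⟩
  have hm : ∀ x, m x = algebraMap R K α * x := fun x => rfl
  ext x
  constructor
  · rintro ⟨y, ⟨t, ht, r, hr⟩, rfl⟩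
    refine ⟨t, ht, r, ?_⟩
    change t • m y = _
    rw [hm]
    simp only [Algebra.smul_def, map_mul, map_one] at *
    linear_combination algebraMap R K α * hr
  · rintro ⟨t, ht, r, hr⟩
    refine ⟨m.symm x, ⟨t, ht, r, ?_⟩, m.apply_symm_apply x⟩
    have hx := hm (m.symm x)
    rw [m.apply_symm_apply] at hx
    apply mul_left_cancel₀ hα'
    simp only [Algebra.smul_def, map_mul, map_one] at *
    linear_combination hr - algebraMap R K t * hx

/-- A nonzero ideal becomes principal after inverting `1 + a`, by Nakayama's lemma applied to
`a = a² + αR`. -/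
lemma exists_local_generator [IsDedekindDomain R] {a : Ideal R} (ha : a ≠ ⊥) :
    ∃ α ∈ a, ∃ t : R, t - 1 ∈ a ∧ ∀ x ∈ a, t * x ∈ Ideal.span {α} := by
  obtain ⟨α, hα⟩ := IsDedekindDomain.exists_sup_span_eq (I := a * a) (J := a) Ideal.mul_le_left
    (mul_ne_zero ha ha)
  have hmem : α ∈ a := by
    have h : Ideal.span {α} ≤ a := le_sup_right.trans hα.le
    exact h (Ideal.mem_span_singleton_self α)
  obtain ⟨t, ht, h⟩ := Submodule.exists_sub_one_mem_and_smul_le_of_fg_of_le_sup (I := a)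
    (N := Ideal.span {α}) (IsNoetherian.noetherian a) le_rfl (by rw [sup_comm]; exact hα.ge)
  exact ⟨α, hmem, t, ht, fun x hx => h (Submodule.smul_mem_pointwise_smul x t a hx)⟩

end QuotientIso

open QuotientIso in
/-- if `R` is a Dedekind domain with field of fractions `K` and `a ⊆ R` is a
nonzero ideal, then the `R`-modules `K/a` and `K/R` are isomorphic. -/
theorem statement_11
    (R : Type*) [CommRing R] [IsDomain R] [IsDedekindDomain R]
    (K : Type*) [Field K] [Algebra R K] [IsFractionRing R K]
    (a : Ideal R) (ha : a ≠ ⊥) :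
    Nonempty ((K ⧸ Submodule.map (Algebra.linearMap R K) (a : Submodule R R)) ≃ₗ[R]
      (K ⧸ Submodule.map (Algebra.linearMap R K) (⊤ : Submodule R R))) := by
  obtain ⟨α, hαa, t, ht, hta⟩ := exists_local_generator ha
  by_cases hα : α = 0
  · -- `α = 0` forces `t a = 0`, so `t = 0` and `a` is the unit ideal
    obtain ⟨x, hx, hx0⟩ := Submodule.exists_mem_ne_zero_of_ne_bot ha
    have ht0 : t = 0 := by simpa [hα, hx0] using hta x hx
    have : a = ⊤ := by
      rw [Ideal.eq_top_iff_one]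
      simpa [ht0] using ht
    exact ⟨Submodule.quotEquivOfEq _ _ (by rw [this])⟩
  obtain ⟨e⟩ := nonempty_nearPart_equiv K a hα
  exact ⟨(quotientInfEquiv _ _ _ (awayPart_inf_nearPart K hαa le_rfl ⟨t, ht, hta⟩)
      (awayPart_sup_nearPart K a hα)).trans
    (((LinearEquiv.refl R _).prodCongr e).trans
      (quotientInfEquiv _ _ _
        (awayPart_inf_nearPart K Submodule.mem_top le_top ⟨1, by simp, by simp⟩)
        (awayPart_sup_nearPart K a one_ne_zero)).symm)⟩
end
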